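/- There exist a constant c > 0 and B₀ ≥ 3 such that for all real B ≥ B₀, the number of pairs (a, b) of positive integers with a ≤ B, b ≤ B, gcd(a,b) = 1, a ≡ 17 (mod 18), b ≡ 11 (mod 18), and such that every prime dividing ab is congruent to 2 modulo 3, is at least c·B²/log B. -/

import Mathlib

/-!
For a quadratic character `χ`, convolve `χ` with the indicator function of the integers whose prime
factors all satisfy `χ p = -1`. The result is nonnegative, and at least `1` on the integers whose
prime factors all satisfy `χ p = 1`. As the partial sums of `∑ χ n / n` are bounded, the sum of
`1 / n` over the latter integers is `O(H)`, where `H` is the sum over the former. Since `log N` is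
at most a constant times the product of the two sums, it is `O(H ^ 2)`, and restricting to coprime
pairs in `H ^ 2` costs only the factor `∑ 1 / g ^ 2`.

By Mertens' argument, which rests on `L(1, χ) ≠ 0`, each reduced residue class contains a positive
proportion of the primes in the sense of Chebyshev. Weighting an integer `b ≤ N` by
`∑ log p ≤ log N`, the sum being over the primes `p ∣ b`, and writing `b = n * p` with `n ≤ √N`,
one bounds the number of admissible `b` prime to `a` below by `N / log N` times the sum of `1 / n`
over the admissible `n ≤ √N` prime to `a`. Applied to both entries, this gives
`(N / log N) ^ 2 * log N` coprime pairs up to a constant. For the character modulo `3`,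
multiplication by powers of `5` and `11` brings the entries into the classes modulo `18`.
-/

open Filter Finset
open scoped Topology
open ArithmeticFunction (vonMangoldt_sum vonMangoldt_nonneg vonMangoldt_apply_prime)
open scoped ArithmeticFunction.vonMangoldt

section Summation

theorem norm_sum_Ioc_smul_le {E : Type*} [SeminormedAddCommGroup E] [NormedSpace ℝ E]
    {f : ℕ → E} {g : ℕ → ℝ} {C : ℝ} {M : ℕ} (hf : ∀ k, ‖∑ n ∈ Ioc M k, f n‖ ≤ C)
    (hg₀ : ∀ n, M < n → 0 ≤ g n) (hg : AntitoneOn g (Set.Ioi M)) (N : ℕ) :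
    ‖∑ n ∈ Ioc M N, g n • f n‖ ≤ C * g (M + 1) := by
  have hC : 0 ≤ C := (norm_nonneg _).trans (hf M)
  set F : ℕ → E := fun k ↦ ∑ n ∈ Ioc M k, f n
  have key (k : ℕ) : ‖∑ n ∈ Ioc M (M + k), g n • f n - g (M + k + 1) • F (M + k)‖ ≤
      C * (g (M + 1) - g (M + k + 1)) := by
    induction k with
    | zero => simp [F]
    | succ k ih =>
      have hanti : 0 ≤ g (M + k + 1) - g (M + k + 1 + 1) :=
        sub_nonneg.2 <| hg (Set.mem_Ioi.2 (by lia)) (Set.mem_Ioi.2 (by lia)) (by lia)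
      have hF : F (M + k + 1) = F (M + k) + f (M + k + 1) := sum_Ioc_succ_top (by lia) _
      calc ‖∑ n ∈ Ioc M (M + k + 1), g n • f n - g (M + k + 1 + 1) • F (M + k + 1)‖
          = ‖(∑ n ∈ Ioc M (M + k), g n • f n - g (M + k + 1) • F (M + k)) +
              (g (M + k + 1) - g (M + k + 1 + 1)) • F (M + k + 1)‖ := by
            rw [sum_Ioc_succ_top (by lia), hF]; congr 1; module
        _ ≤ C * (g (M + 1) - g (M + k + 1)) + (g (M + k + 1) - g (M + k + 1 + 1)) * C := by
            refine (norm_add_le _ _).trans (add_le_add ih ?_)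
            rw [norm_smul, Real.norm_of_nonneg hanti]
            exact mul_le_mul_of_nonneg_left (hf _) hanti
        _ = C * (g (M + 1) - g (M + (k + 1) + 1)) := by rw [← add_assoc M k 1]; ring
  obtain hNM | ⟨k, rfl⟩ := (le_total N M).imp_right Nat.exists_eq_add_of_le
  · simpa [Ioc_eq_empty_of_le hNM] using mul_nonneg hC (hg₀ (M + 1) (by lia))
  have hlast : 0 ≤ g (M + k + 1) := hg₀ _ (by lia)
  calc ‖∑ n ∈ Ioc M (M + k), g n • f n‖
      ≤ ‖∑ n ∈ Ioc M (M + k), g n • f n - g (M + k + 1) • F (M + k)‖ +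
          ‖g (M + k + 1) • F (M + k)‖ := norm_le_norm_sub_add _ _
    _ ≤ C * (g (M + 1) - g (M + k + 1)) + g (M + k + 1) * C := by
        refine add_le_add (key k) ?_
        rw [norm_smul, Real.norm_of_nonneg hlast]
        exact mul_le_mul_of_nonneg_left (hf _) hlast
    _ = C * g (M + 1) := by ring

theorem sum_Ioc_sum_divisorsAntidiagonal {E : Type*} [AddCommMonoid E] (F : ℕ → ℕ → E) (N : ℕ) :
    ∑ n ∈ Ioc 0 N, ∑ x ∈ n.divisorsAntidiagonal, F x.1 x.2 =
      ∑ d ∈ Ioc 0 N, ∑ e ∈ Ioc 0 (N / d), F d e := by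
  rw [sum_sigma', sum_sigma']
  refine sum_bij' (fun x _ ↦ ⟨x.2.1, x.2.2⟩) (fun x _ ↦ ⟨x.1 * x.2, (x.1, x.2)⟩) ?_ ?_ ?_ ?_ ?_
  · rintro ⟨n, d, e⟩ h
    simp only [mem_sigma, mem_Ioc, Nat.mem_divisorsAntidiagonal] at h ⊢
    obtain ⟨⟨-, hn⟩, rfl, hde⟩ := h
    obtain ⟨hd, he⟩ := mul_ne_zero_iff.1 hde
    exact ⟨⟨hd.pos, (Nat.le_mul_of_pos_right d he.pos).trans hn⟩, he.pos,
      (Nat.le_div_iff_mul_le hd.pos).2 (by rwa [mul_comm])⟩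
  · rintro ⟨d, e⟩ h
    simp only [mem_sigma, mem_Ioc, Nat.mem_divisorsAntidiagonal] at h ⊢
    obtain ⟨⟨hd, -⟩, he, hle⟩ := h
    exact ⟨⟨Nat.mul_pos hd he, by rw [mul_comm]; exact (Nat.le_div_iff_mul_le hd).1 hle⟩, trivial,
      (Nat.mul_pos hd he).ne'⟩
  · rintro ⟨n, d, e⟩ h
    simp only [mem_sigma, Nat.mem_divisorsAntidiagonal] at h
    obtain ⟨-, rfl, -⟩ := h
    rfl
  · simp
  · simp

end Summation

section CharacterSums

variable {𝕜 : Type*} [RCLike 𝕜] {q : ℕ} [NeZero q] {χ : DirichletCharacter 𝕜 q}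

theorem sum_Ioc_add_dirichletCharacter_eq_zero (hχ : χ ≠ 1) (m : ℕ) :
    ∑ n ∈ Ioc m (m + q), χ n = 0 := by
  have hinj : Set.InjOn (Nat.cast : ℕ → ZMod q) (Ioc m (m + q)) := fun a ha b hb hab ↦ by
    rw [coe_Ioc, Set.mem_Ioc] at ha hb
    exact ((ZMod.natCast_eq_natCast_iff a b q).1 hab).eq_of_abs_lt (by rw [abs_lt]; lia)
  rw [← MulChar.sum_eq_zero_of_ne_one hχ]
  exact sum_nbij Nat.cast (by simp) hinj
    (surjOn_of_injOn_of_card_le _ (by simp) hinj (by simp [ZMod.card])) (by simp)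

theorem norm_sum_Ioc_dirichletCharacter_le (hχ : χ ≠ 1) (M N : ℕ) :
    ‖∑ n ∈ Ioc M N, χ n‖ ≤ q := by
  induction N using Nat.strong_induction_on with
  | h N ih =>
    obtain hN | hN := lt_or_ge N (M + q)
    · calc ‖∑ n ∈ Ioc M N, χ n‖ ≤ ∑ _ ∈ Ioc M N, (1 : ℝ) :=
            norm_sum_le_of_le _ fun n _ ↦ χ.norm_le_one n
        _ ≤ q := by simp; lia
    · have hq : 0 < q := Nat.pos_of_neZero q
      have hperiod : ∑ n ∈ Ioc (N - q) N, χ n = 0 := by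
        simpa [Nat.sub_add_cancel (show q ≤ N by lia)] using
          sum_Ioc_add_dirichletCharacter_eq_zero hχ (N - q)
      rw [← sum_Ioc_consecutive _ (show M ≤ N - q by lia) (Nat.sub_le N q), hperiod, add_zero]
      exact ih _ (by lia)

theorem norm_sum_Ioc_rpow_smul_dirichletCharacter_le (hχ : χ ≠ 1) {s : ℝ} (hs : 0 ≤ s)
    (M N : ℕ) : ‖∑ n ∈ Ioc M N, (n : ℝ) ^ (-s) • χ n‖ ≤ q * (M + 1 : ℝ) ^ (-s) := by
  have hanti : AntitoneOn (fun n : ℕ ↦ (n : ℝ) ^ (-s)) (Set.Ioi M) := fun a ha b _ hab ↦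
    Real.rpow_le_rpow_of_nonpos (by exact_mod_cast (Nat.zero_le M).trans_lt ha)
      (by exact_mod_cast hab) (by simpa)
  exact_mod_cast norm_sum_Ioc_smul_le (norm_sum_Ioc_dirichletCharacter_le hχ M)
    (fun n _ ↦ by positivity) hanti N

theorem norm_sum_Ioc_inv_smul_dirichletCharacter_le (hχ : χ ≠ 1) (N : ℕ) :
    ‖∑ n ∈ Ioc 0 N, (n : ℝ)⁻¹ • χ n‖ ≤ q := by
  simpa [Real.rpow_neg_one] using
    norm_sum_Ioc_rpow_smul_dirichletCharacter_le hχ zero_le_one 0 N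

theorem exists_norm_sum_Ioc_log_smul_dirichletCharacter_le (hχ : χ ≠ 1) :
    ∃ C : ℝ, ∀ N : ℕ, ‖∑ n ∈ Ioc 0 N, (Real.log n / n) • χ n‖ ≤ C := by
  set g : ℕ → ℝ := fun n ↦ Real.log n / n
  have hpos (n : ℕ) : 0 ≤ g n := by positivity
  have hhead {N : ℕ} (hN : N ≤ 2) : ‖∑ n ∈ Ioc 0 N, g n • χ n‖ ≤ ∑ n ∈ Ioc 0 2, g n :=
    calc ‖∑ n ∈ Ioc 0 N, g n • χ n‖ ≤ ∑ n ∈ Ioc 0 N, g n := norm_sum_le_of_le _ fun n _ ↦ by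
          rw [norm_smul, Real.norm_of_nonneg (hpos n)]
          exact mul_le_of_le_one_right (hpos n) (χ.norm_le_one n)
      _ ≤ ∑ n ∈ Ioc 0 2, g n :=
          sum_le_sum_of_subset_of_nonneg (Ioc_subset_Ioc_right hN) fun n _ _ ↦ hpos n
  -- `log x / x` is decreasing only from `e` on, so the terms with `n ≤ 2` are split off.
  have hanti : AntitoneOn g (Set.Ioi 2) := by
    have hmem {n : ℕ} (hn : n ∈ Set.Ioi 2) : (n : ℝ) ∈ {x : ℝ | Real.exp 1 ≤ x} :=
      Real.exp_one_lt_three.le.trans (by exact_mod_cast Set.mem_Ioi.1 hn)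
    exact fun a ha b hb hab ↦
      Real.log_div_self_antitoneOn (hmem ha) (hmem hb) (by exact_mod_cast hab)
  refine ⟨∑ n ∈ Ioc 0 2, g n + q * g 3, fun N ↦ ?_⟩
  obtain hN | hN := le_total N 2
  · exact (hhead hN).trans (le_add_of_nonneg_right (mul_nonneg q.cast_nonneg (hpos _)))
  · rw [← sum_Ioc_consecutive _ zero_le_two hN]
    exact (norm_add_le _ _).trans <| add_le_add (hhead le_rfl) <|
      norm_sum_Ioc_smul_le (norm_sum_Ioc_dirichletCharacter_le hχ 2) (fun n _ ↦ hpos n) hanti N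

theorem norm_LFunction_sub_sum_Ioc_le_of_one_lt {χ : DirichletCharacter ℂ q} (hχ : χ ≠ 1) {s : ℝ}
    (hs : 1 < s) (N : ℕ) :
    ‖χ.LFunction s - ∑ n ∈ Ioc 0 N, (n : ℝ) ^ (-s) • χ n‖ ≤ q * (N + 1 : ℝ) ^ (-s) := by
  have hterm (n : ℕ) : LSeries.term (χ ·) s n = (n : ℝ) ^ (-s) • χ n := by
    obtain rfl | hn := eq_or_ne n 0
    · simp [Real.zero_rpow (show -s ≠ 0 by linarith)]
    · rw [LSeries.term_of_ne_zero hn, Complex.real_smul, Complex.ofReal_cpow n.cast_nonneg,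
        Complex.ofReal_neg, Complex.cpow_neg, Complex.ofReal_natCast, div_eq_inv_mul]
  have hsum : HasSum (fun n : ℕ ↦ (n : ℝ) ^ (-s) • χ n) (χ.LFunction s) := by
    have hs' : 1 < (s : ℂ).re := by simpa
    rw [χ.LFunction_eq_LSeries hs', ← funext hterm]
    exact (χ.LSeriesSummable_of_one_lt_re hs').LSeriesHasSum
  have hlim : Tendsto (fun M ↦ ∑ n ∈ Ioc 0 M, ((n : ℕ) : ℝ) ^ (-s) • χ n) atTop
      (𝓝 (χ.LFunction s)) := by
    refine (hsum.tendsto_sum_nat.comp (tendsto_add_atTop_nat 1)).congr fun M ↦ ?_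
    rw [Function.comp_apply, sum_range_eq_add_Ico _ (by lia), Nat.cast_zero,
      Real.zero_rpow (by linarith), zero_smul, zero_add]
    rfl
  refine le_of_tendsto (hlim.sub_const _).norm ?_
  filter_upwards [eventually_ge_atTop N] with M hM
  rw [← sum_Ioc_consecutive _ N.zero_le hM, add_sub_cancel_left]
  exact norm_sum_Ioc_rpow_smul_dirichletCharacter_le hχ (by linarith) N M

theorem norm_LFunction_one_sub_sum_Ioc_le {χ : DirichletCharacter ℂ q} (hχ : χ ≠ 1) (N : ℕ) :
    ‖χ.LFunction 1 - ∑ n ∈ Ioc 0 N, (n : ℝ)⁻¹ • χ n‖ ≤ q / (N + 1) := by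
  have hL : Continuous fun s : ℝ ↦ χ.LFunction s :=
    (DirichletCharacter.differentiable_LFunction hχ).continuous.comp Complex.continuous_ofReal
  have hpow {x : ℝ} (hx : 0 < x) : Continuous fun s : ℝ ↦ x ^ (-s) :=
    (Real.continuous_const_rpow hx.ne').comp continuous_neg
  have hsum : Continuous fun s : ℝ ↦ ∑ n ∈ Ioc 0 N, (n : ℝ) ^ (-s) • χ n :=
    continuous_finsetSum _ fun n hn ↦
      (hpow (Nat.cast_pos.2 (mem_Ioc.1 hn).1)).smul continuous_const
  have hle : ‖χ.LFunction (1 : ℝ) - ∑ n ∈ Ioc 0 N, (n : ℝ) ^ (-1 : ℝ) • χ n‖ ≤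
      q * (N + 1 : ℝ) ^ (-1 : ℝ) :=
    le_of_tendsto_of_tendsto (b := 𝓝[>] (1 : ℝ))
      ((hL.sub hsum).norm.continuousAt.mono_left nhdsWithin_le_nhds)
      (((hpow N.cast_add_one_pos).const_mul _).continuousAt.mono_left nhdsWithin_le_nhds)
      (eventually_mem_nhdsWithin.mono fun s hs ↦ norm_LFunction_sub_sum_Ioc_le_of_one_lt hχ hs N)
  simpa only [Real.rpow_neg_one, Complex.ofReal_one, div_eq_mul_inv] using hle

end CharacterSums

section Mertens

variable {𝕜 : Type*} [RCLike 𝕜] {q : ℕ}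

theorem sum_Ioc_vonMangoldt_le (N : ℕ) : ∑ n ∈ Ioc 0 N, Λ n ≤ (Real.log 4 + 4) * N := by
  simpa only [Chebyshev.psi, Nat.floor_natCast] using Chebyshev.psi_le_const_mul_self N.cast_nonneg

theorem natCast_div_lt_natCast_div_add_one (m n : ℕ) : (m / n : ℝ) < (m / n : ℕ) + 1 := by
  rw [← Nat.floor_div_eq_div (K := ℝ)]
  exact Nat.lt_floor_add_one _

theorem sum_Ioc_log_smul_dirichletCharacter (χ : DirichletCharacter 𝕜 q) (N : ℕ) :
    ∑ n ∈ Ioc 0 N, (Real.log n / n) • χ n =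
      ∑ d ∈ Ioc 0 N, (Λ d / d) • χ d * ∑ e ∈ Ioc 0 (N / d), (e : ℝ)⁻¹ • χ e := by
  simp only [mul_sum]
  rw [← sum_Ioc_sum_divisorsAntidiagonal (fun d e ↦ (Λ d / d) • χ d * (e : ℝ)⁻¹ • χ e)]
  refine sum_congr rfl fun n _ ↦ ?_
  rw [← vonMangoldt_sum, ← Nat.sum_divisorsAntidiagonal (fun d _ ↦ Λ d), sum_div, sum_smul]
  refine sum_congr rfl fun x hx ↦ ?_
  rw [← (Nat.mem_divisorsAntidiagonal.1 hx).1, smul_mul_smul_comm, Nat.cast_mul, Nat.cast_mul,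
    map_mul, div_mul_eq_div_div, div_eq_mul_inv (Λ x.1 / x.1)]

theorem exists_norm_sum_Ioc_vonMangoldt_smul_dirichletCharacter_le [NeZero q]
    {χ : DirichletCharacter ℂ q} (hχ : χ ≠ 1) :
    ∃ C : ℝ, ∀ N : ℕ, ‖∑ n ∈ Ioc 0 N, (Λ n / n) • χ n‖ ≤ C := by
  obtain ⟨A, hA⟩ := exists_norm_sum_Ioc_log_smul_dirichletCharacter_le hχ
  set L := χ.LFunction 1
  set S : ℕ → ℂ := fun N ↦ ∑ n ∈ Ioc 0 N, (Λ n / n) • χ n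
  have hL : 0 < ‖L‖ := norm_pos_iff.2 (DirichletCharacter.LFunction_apply_one_ne_zero hχ)
  have htail {N d : ℕ} (hd : d ∈ Ioc 0 N) :
      ‖(Λ d / d) • χ d * (L - ∑ e ∈ Ioc 0 (N / d), (e : ℝ)⁻¹ • χ e)‖ ≤ q * (Λ d / N) := by
    have hd0 : (0 : ℝ) < d := Nat.cast_pos.2 (mem_Ioc.1 hd).1
    have hN0 : (0 : ℝ) < N := hd0.trans_le (Nat.cast_le.2 (mem_Ioc.1 hd).2)
    have : 0 ≤ Λ d := vonMangoldt_nonneg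
    calc ‖(Λ d / d) • χ d * (L - ∑ e ∈ Ioc 0 (N / d), (e : ℝ)⁻¹ • χ e)‖
        ≤ Λ d / d * 1 * (q / ((N / d : ℕ) + 1)) := by
          rw [norm_mul, norm_smul, Real.norm_of_nonneg (by positivity)]
          gcongr
          exacts [χ.norm_le_one d, norm_LFunction_one_sub_sum_Ioc_le hχ _]
      _ ≤ Λ d / d * 1 * (q / (N / d)) := by
          gcongr
          exact (natCast_div_lt_natCast_div_add_one N d).le
      _ = q * (Λ d / N) := by field_simp
  have hLS (N : ℕ) : ‖L‖ * ‖S N‖ ≤ A + q * (Real.log 4 + 4) := by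
    have hsplit : L * S N = ∑ n ∈ Ioc 0 N, (Real.log n / n) • χ n +
        ∑ d ∈ Ioc 0 N, (Λ d / d) • χ d * (L - ∑ e ∈ Ioc 0 (N / d), (e : ℝ)⁻¹ • χ e) := by
      rw [sum_Ioc_log_smul_dirichletCharacter, ← sum_add_distrib, mul_sum]
      exact sum_congr rfl fun d _ ↦ by ring
    rw [← norm_mul, hsplit]
    refine (norm_add_le _ _).trans (add_le_add (hA N) ?_)
    calc ‖∑ d ∈ Ioc 0 N, (Λ d / d) • χ d * (L - ∑ e ∈ Ioc 0 (N / d), (e : ℝ)⁻¹ • χ e)‖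
        ≤ ∑ d ∈ Ioc 0 N, q * (Λ d / N) := norm_sum_le_of_le _ fun d ↦ htail
      _ = q * ((∑ d ∈ Ioc 0 N, Λ d) / N) := by rw [← mul_sum, sum_div]
      _ ≤ q * (Real.log 4 + 4) := by
          gcongr
          exact div_le_of_le_mul₀ N.cast_nonneg (by positivity) (sum_Ioc_vonMangoldt_le N)
  exact ⟨(A + q * (Real.log 4 + 4)) / ‖L‖, fun N ↦ (le_div_iff₀' hL).2 (hLS N)⟩

theorem sum_Ioc_vonMangoldt_mul_div (N : ℕ) :
    ∑ n ∈ Ioc 0 N, Λ n * (N / n : ℕ) = Real.log N.factorial := by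
  rw [← ArithmeticFunction.sum_Ioc_mul_zeta_eq_sum, ArithmeticFunction.vonMangoldt_mul_zeta]
  induction N with
  | zero => simp
  | succ N ih =>
    rw [sum_Ioc_succ_top N.zero_le, ih, Nat.factorial_succ, Nat.cast_mul,
      Real.log_mul (by positivity) (by positivity), add_comm, ArithmeticFunction.log_apply]

theorem exists_abs_sum_Ioc_vonMangoldt_div_sub_log_le :
    ∃ C : ℝ, ∀ N : ℕ, |∑ n ∈ Ioc 0 N, Λ n / n - Real.log N| ≤ C := by
  refine ⟨Real.log 4 + 4, fun N ↦ ?_⟩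
  obtain rfl | hN := N.eq_zero_or_pos
  · simpa using (show 0 ≤ Real.log 4 + 4 by positivity)
  have hN0 : (0 : ℝ) < N := Nat.cast_pos.2 hN
  have hmul : N * ∑ n ∈ Ioc 0 N, Λ n / n = ∑ n ∈ Ioc 0 N, Λ n * (N / n : ℝ) := by
    rw [mul_sum]
    exact sum_congr rfl fun n _ ↦ by ring
  have hlower : N * Real.log N - N ≤ N * ∑ n ∈ Ioc 0 N, Λ n / n :=
    calc N * Real.log N - N ≤ Real.log N.factorial := by
          have := Stirling.le_log_factorial_stirling hN.ne'
          have : 0 ≤ Real.log (2 * Real.pi) := Real.log_nonneg (by linarith [Real.pi_gt_three])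
          linarith [Real.log_natCast_nonneg N]
      _ = ∑ n ∈ Ioc 0 N, Λ n * (N / n : ℕ) := (sum_Ioc_vonMangoldt_mul_div N).symm
      _ ≤ N * ∑ n ∈ Ioc 0 N, Λ n / n := by
          rw [hmul]
          gcongr
          exact Nat.cast_div_le
  have hupper : N * ∑ n ∈ Ioc 0 N, Λ n / n ≤ N * Real.log N + (Real.log 4 + 4) * N :=
    calc N * ∑ n ∈ Ioc 0 N, Λ n / n ≤ ∑ n ∈ Ioc 0 N, Λ n * ((N / n : ℕ) + 1) := by
          rw [hmul]
          gcongr with n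
          exact (natCast_div_lt_natCast_div_add_one N n).le
      _ = Real.log N.factorial + ∑ n ∈ Ioc 0 N, Λ n := by
          simp only [mul_add, mul_one, sum_add_distrib, sum_Ioc_vonMangoldt_mul_div]
      _ ≤ N * Real.log N + (Real.log 4 + 4) * N := by
          refine add_le_add ?_ (sum_Ioc_vonMangoldt_le N)
          rw [← Real.log_pow]
          exact Real.log_le_log (by positivity) (by exact_mod_cast N.factorial_le_pow)
  have hlog : 0 ≤ N * Real.log 4 := by positivity
  rw [abs_le]
  constructor <;> refine le_of_mul_le_mul_left ?_ hN0 <;> linarith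

theorem exists_forall_natCast_le_sum_Ioc {f : ℕ → ℝ} {α C : ℝ} (hf : ∀ n, 0 ≤ f n) (hα : 0 < α)
    (h : ∀ N : ℕ, |∑ n ∈ Ioc 0 N, f n / n - α * Real.log N| ≤ C) :
    ∃ c > 0, ∀ᶠ N : ℕ in atTop, c * N ≤ ∑ n ∈ Ioc 0 N, f n := by
  obtain ⟨K, hK, hK0⟩ : ∃ K : ℕ, (2 * C + 1) / α ≤ Real.log K ∧ 0 < K :=
    ((Real.tendsto_log_atTop.comp tendsto_natCast_atTop_atTop).eventually_ge_atTop _ |>.and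
      (eventually_gt_atTop 0)).exists
  have hK0' : (0 : ℝ) < K := Nat.cast_pos.2 hK0
  refine ⟨(K : ℝ)⁻¹, inv_pos.2 hK0', ?_⟩
  filter_upwards [eventually_ge_atTop K] with N hN
  have hM : 0 < N / K := Nat.div_pos hN hK0
  have hN0 : (0 : ℝ) < N := Nat.cast_pos.2 (hK0.trans_le hN)
  have hlog : Real.log (N / K : ℕ) ≤ Real.log N - Real.log K := by
    rw [← Real.log_div hN0.ne' hK0'.ne']
    exact Real.log_le_log (Nat.cast_pos.2 hM) Nat.cast_div_le
  have hwindow : 1 ≤ ∑ n ∈ Ioc (N / K) N, f n / n := by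
    have hsplit := sum_Ioc_consecutive (fun n ↦ f n / n) (N / K).zero_le (Nat.div_le_self N K)
    have hlow := (abs_le.1 (h N)).1
    have hupp := (abs_le.1 (h (N / K))).2
    rw [div_le_iff₀' hα] at hK
    nlinarith
  calc (K : ℝ)⁻¹ * N ≤ (K : ℝ)⁻¹ * N * ∑ n ∈ Ioc (N / K) N, f n / n :=
        le_mul_of_one_le_right (by positivity) hwindow
    _ = ∑ n ∈ Ioc (N / K) N, f n / n * (N / K) := by rw [← sum_mul]; ring
    _ ≤ ∑ n ∈ Ioc (N / K) N, f n / n * n := by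
        gcongr with n hn
        · exact div_nonneg (hf n) n.cast_nonneg
        · refine (natCast_div_lt_natCast_div_add_one N K).le.trans ?_
          exact_mod_cast (mem_Ioc.1 hn).1
    _ = ∑ n ∈ Ioc (N / K) N, f n := sum_congr rfl fun n hn ↦
        div_mul_cancel₀ _ (Nat.cast_ne_zero.2 (by have := (mem_Ioc.1 hn).1; lia))
    _ ≤ ∑ n ∈ Ioc 0 N, f n :=
        sum_le_sum_of_subset_of_nonneg (Ioc_subset_Ioc_left (N / K).zero_le) fun n _ _ ↦ hf n

end Mertens

section PrimesInAP

open ArithmeticFunction.vonMangoldt (residueClass residueClass_apply residueClass_nonneg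
  summable_residueClass_non_primes_div)

variable {q : ℕ}

theorem summable_vonMangoldt_div_of_not_prime :
    Summable fun n : ℕ ↦ if n.Prime then 0 else Λ n / n := by
  refine (summable_residueClass_non_primes_div (0 : ZMod 1)).congr fun n ↦ ?_
  rw [ite_div, zero_div, residueClass, Set.indicator_of_mem (s := {n : ℕ | (n : ZMod 1) = 0})
    (Subsingleton.elim _ _)]

theorem summable_vonMangoldt_div_of_not_coprime (hq : q ≠ 0) :
    Summable fun n : ℕ ↦ if n.Coprime q then 0 else Λ n / n := by
  have hnonneg (n : ℕ) : 0 ≤ Λ n / n := div_nonneg vonMangoldt_nonneg n.cast_nonneg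
  have hfinite : Summable fun n : ℕ ↦ if n ∈ q.primeFactors then Λ n / n else 0 :=
    summable_of_ne_finset_zero (s := q.primeFactors) fun n hn ↦ if_neg hn
  refine .of_nonneg_of_le (fun n ↦ ?_) (fun n ↦ ?_)
    (summable_vonMangoldt_div_of_not_prime.add hfinite)
  · split_ifs
    exacts [le_rfl, hnonneg n]
  · by_cases hn : n.Prime
    · by_cases hnq : n ∣ q <;>
        simp [hn, hn.coprime_iff_not_dvd, hnq, hq]
    · simp only [hn, Nat.mem_primeFactors, false_and, if_false, add_zero]
      split_ifs
      exacts [hnonneg n, le_rfl]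

theorem exists_norm_sum_Ioc_vonMangoldt_smul_one_sub_log_le [NeZero q] : ∃ C : ℝ, ∀ N : ℕ,
    ‖∑ n ∈ Ioc 0 N, (Λ n / n) • (1 : DirichletCharacter ℂ q) n - Real.log N‖ ≤ C := by
  obtain ⟨C, hC⟩ := exists_abs_sum_Ioc_vonMangoldt_div_sub_log_le
  set g : ℕ → ℝ := fun n ↦ if n.Coprime q then 0 else Λ n / n
  have hg (n : ℕ) : 0 ≤ g n := by
    simp only [g]
    split_ifs
    exacts [le_rfl, div_nonneg vonMangoldt_nonneg n.cast_nonneg]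
  have hsplit (n : ℕ) : (Λ n / n) • (1 : DirichletCharacter ℂ q) n = (Λ n / n - g n : ℝ) := by
    by_cases hn : n.Coprime q
    · rw [MulChar.one_apply ((ZMod.isUnit_iff_coprime n q).2 hn)]
      simp only [g, if_pos hn, sub_zero, Complex.real_smul, mul_one]
    · rw [MulChar.map_nonunit _ (mt (ZMod.isUnit_iff_coprime n q).1 hn)]
      simp only [g, if_neg hn, sub_self, smul_zero, Complex.ofReal_zero]
  refine ⟨C + ∑' n, g n, fun N ↦ ?_⟩
  simp only [hsplit, sum_sub_distrib, ← Complex.ofReal_sum, ← Complex.ofReal_sub,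
    Complex.norm_real, Real.norm_eq_abs]
  rw [sub_right_comm]
  refine (abs_sub _ _).trans (add_le_add (hC N) ?_)
  rw [abs_of_nonneg (sum_nonneg fun n _ ↦ hg n)]
  exact (summable_vonMangoldt_div_of_not_coprime (NeZero.ne q)).sum_le_tsum _ fun n _ ↦ hg n

theorem exists_abs_sum_Ioc_residueClass_div_sub_le [NeZero q] {a : ZMod q} (ha : IsUnit a) :
    ∃ C : ℝ, ∀ N : ℕ,
      |∑ n ∈ Ioc 0 N, residueClass a n / n - (q.totient : ℝ)⁻¹ * Real.log N| ≤ C := by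
  classical
  set S : DirichletCharacter ℂ q → ℕ → ℂ := fun χ N ↦
    ∑ n ∈ Ioc 0 N, (Λ n / n) • χ n - if χ = 1 then (Real.log N : ℂ) else 0
  have hS (χ : DirichletCharacter ℂ q) : ∃ C : ℝ, ∀ N : ℕ, ‖S χ N‖ ≤ C := by
    obtain rfl | hχ := eq_or_ne χ 1
    · simpa [S] using exists_norm_sum_Ioc_vonMangoldt_smul_one_sub_log_le
    · simpa [S, hχ] using exists_norm_sum_Ioc_vonMangoldt_smul_dirichletCharacter_le hχ
  choose C hC using hS
  have horth (N : ℕ) : ((∑ n ∈ Ioc 0 N, residueClass a n / n -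
      (q.totient : ℝ)⁻¹ * Real.log N : ℝ) : ℂ) = (q.totient : ℂ)⁻¹ * ∑ χ, χ a⁻¹ * S χ N := by
    have hone : (1 : DirichletCharacter ℂ q) a⁻¹ = 1 :=
      MulChar.one_apply (.of_mul_eq_one a (ZMod.inv_mul_of_unit a ha))
    have hclass (n : ℕ) : ((residueClass a n / n : ℝ) : ℂ) =
        (q.totient : ℂ)⁻¹ * ∑ χ : DirichletCharacter ℂ q, χ a⁻¹ * ((Λ n / n) • χ n) := by
      rw [Complex.ofReal_div, residueClass_apply ha, mul_div_assoc, sum_div]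
      simp only [Complex.real_smul, Complex.ofReal_div, Complex.ofReal_natCast]
      congr! 2
      ring
    simp only [S, mul_sub, sum_sub_distrib, mul_ite, mul_zero, sum_ite_eq', mem_univ, if_true,
      hone, one_mul, Complex.ofReal_sub, Complex.ofReal_mul, Complex.ofReal_inv,
      Complex.ofReal_natCast, Complex.ofReal_sum, hclass, mul_sum]
    rw [sum_comm]
  refine ⟨(q.totient : ℝ)⁻¹ * ∑ χ, C χ, fun N ↦ ?_⟩
  rw [← Real.norm_eq_abs, ← Complex.norm_real, horth, norm_mul, norm_inv, Complex.norm_natCast]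
  gcongr
  refine norm_sum_le_of_le _ fun χ _ ↦ ?_
  rw [norm_mul]
  exact (mul_le_of_le_one_left (norm_nonneg _) (χ.norm_le_one _)).trans (hC χ N)

open scoped Classical in
/-- The primes `p ≤ N` lying in the set `S`. -/
noncomputable def primesIn (S : Set ℕ) (N : ℕ) : Finset ℕ := {p ∈ Ioc 0 N | p.Prime ∧ p ∈ S}

theorem mem_primesIn {S : Set ℕ} {N p : ℕ} : p ∈ primesIn S N ↔ p ≤ N ∧ p.Prime ∧ p ∈ S := by
  simp only [primesIn, mem_filter, mem_Ioc]
  exact ⟨fun h ↦ ⟨h.1.2, h.2⟩, fun h ↦ ⟨⟨h.2.1.pos, h.1⟩, h.2⟩⟩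

theorem primesIn_mono {S T : Set ℕ} (h : S ⊆ T) (N : ℕ) : primesIn S N ⊆ primesIn T N := by
  intro p
  simp only [mem_primesIn]
  exact fun hp ↦ ⟨hp.1, hp.2.1, h hp.2.2⟩

theorem exists_abs_sum_primesIn_log_div_sub_le [NeZero q] {a : ZMod q} (ha : IsUnit a) :
    ∃ C : ℝ, ∀ N : ℕ, |∑ p ∈ primesIn {p | (p : ZMod q) = a} N, Real.log p / p -
      (q.totient : ℝ)⁻¹ * Real.log N| ≤ C := by
  classical
  obtain ⟨C, hC⟩ := exists_abs_sum_Ioc_residueClass_div_sub_le ha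
  set g : ℕ → ℝ := fun n ↦ (if n.Prime then 0 else residueClass a n) / n
  have hg (n : ℕ) : 0 ≤ g n := by
    simp only [g]
    split_ifs
    exacts [by simp, div_nonneg (residueClass_nonneg a n) n.cast_nonneg]
  have hsplit (N : ℕ) : ∑ p ∈ primesIn {p | (p : ZMod q) = a} N, Real.log p / p =
      ∑ n ∈ Ioc 0 N, residueClass a n / n - ∑ n ∈ Ioc 0 N, g n := by
    rw [primesIn, sum_filter, ← sum_sub_distrib]
    refine sum_congr rfl fun n _ ↦ ?_
    by_cases hn : n.Prime
    · simp [g, hn, residueClass, Set.indicator_apply, ite_div, vonMangoldt_apply_prime hn]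
    · simp [g, hn]
  refine ⟨C + ∑' n, g n, fun N ↦ ?_⟩
  rw [hsplit, sub_right_comm]
  refine (abs_sub _ _).trans (add_le_add (hC N) ?_)
  rw [abs_of_nonneg (sum_nonneg fun n _ ↦ hg n)]
  exact (summable_residueClass_non_primes_div a).sum_le_tsum _ fun n _ ↦ hg n

theorem sum_primesIn_le_sum_primesIn_diff_add {f : ℕ → ℝ} (hf : ∀ n, 0 ≤ f n) (S : Set ℕ)
    (T : Finset ℕ) (N : ℕ) :
    ∑ p ∈ primesIn S N, f p ≤ ∑ p ∈ primesIn (S \ T) N, f p + ∑ p ∈ T, f p := by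
  have hsub : primesIn S N ⊆ primesIn (S \ T) N ∪ T := fun p hp ↦ by
    rw [mem_union, mem_primesIn]
    rw [mem_primesIn] at hp
    exact or_iff_not_imp_right.2 fun hpT ↦ ⟨hp.1, hp.2.1, hp.2.2, hpT⟩
  refine (sum_le_sum_of_subset_of_nonneg hsub fun p _ _ ↦ hf p).trans ?_
  rw [← sum_union_inter]
  exact le_add_of_nonneg_right (sum_nonneg fun p _ ↦ hf p)

theorem exists_forall_natCast_le_sum_primesIn_log {S : Set ℕ} {α C : ℝ} (hα : 0 < α)
    (h : ∀ N : ℕ, |∑ p ∈ primesIn S N, Real.log p / p - α * Real.log N| ≤ C) :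
    ∃ c > 0, ∀ᶠ N : ℕ in atTop, c * N ≤ ∑ p ∈ primesIn S N, Real.log p := by
  classical
  simpa only [primesIn, sum_filter] using exists_forall_natCast_le_sum_Ioc
    (f := fun n ↦ if n.Prime ∧ n ∈ S then Real.log n else 0)
    (fun n ↦ by split_ifs <;> positivity) hα
    (fun N ↦ by simpa only [primesIn, sum_filter, ite_div, zero_div] using h N)

theorem exists_forall_natCast_le_sum_primesIn_log_of_diff_subset [NeZero q] {a : ZMod q}
    (ha : IsUnit a) {S : Set ℕ} {T : Finset ℕ} (hS : {p : ℕ | (p : ZMod q) = a} \ T ⊆ S) :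
    ∃ c > 0, ∀ᶠ N : ℕ in atTop, c * N ≤ ∑ p ∈ primesIn S N, Real.log p := by
  obtain ⟨C, hC⟩ := exists_abs_sum_primesIn_log_div_sub_le ha
  set R : Set ℕ := {p | (p : ZMod q) = a}
  have hlog (n : ℕ) : 0 ≤ Real.log n / n := by positivity
  have hremove (N : ℕ) : |∑ p ∈ primesIn (R \ T) N, Real.log p / p -
      (q.totient : ℝ)⁻¹ * Real.log N| ≤ C + ∑ p ∈ T, Real.log p / p := by
    have hle : ∑ p ∈ primesIn (R \ T) N, Real.log p / p ≤ ∑ p ∈ primesIn R N, Real.log p / p :=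
      sum_le_sum_of_subset_of_nonneg (primesIn_mono Set.sdiff_subset N) fun n _ _ ↦ hlog n
    have hge := sum_primesIn_le_sum_primesIn_diff_add hlog R T N
    have : 0 ≤ ∑ p ∈ T, Real.log p / p := sum_nonneg fun n _ ↦ hlog n
    have := abs_le.1 (hC N)
    rw [abs_le]
    constructor <;> linarith
  have hφ : (0 : ℝ) < (q.totient : ℝ)⁻¹ :=
    inv_pos.2 (Nat.cast_pos.2 (q.totient_pos.2 q.pos_of_neZero))
  obtain ⟨c, hc, h⟩ := exists_forall_natCast_le_sum_primesIn_log hφ hremove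
  refine ⟨c, hc, h.mono fun N hN ↦ hN.trans ?_⟩
  exact sum_le_sum_of_subset_of_nonneg (primesIn_mono hS N) fun n _ _ ↦ Real.log_natCast_nonneg n

end PrimesInAP

section PrescribedPrimes

variable {S T : Set ℕ} {N n m p : ℕ}

/-- The multiplicative monoid generated by the primes in `S`, that is, the positive integers all of
whose prime factors lie in `S`; elements of `S` that are not prime are ignored. -/
def factoredMonoid (S : Set ℕ) : Submonoid ℕ := Submonoid.closure {p | p.Prime ∧ p ∈ S}

theorem mem_factoredMonoid :
    n ∈ factoredMonoid S ↔ n ≠ 0 ∧ ∀ p : ℕ, p.Prime → p ∣ n → p ∈ S := by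
  constructor
  · refine Submonoid.closure_induction (fun p hp ↦ ⟨hp.1.ne_zero, fun r hr hrp ↦ ?_⟩)
      ⟨one_ne_zero, fun p hp h ↦ (hp.not_dvd_one h).elim⟩
      fun a b _ _ ha hb ↦ ⟨mul_ne_zero ha.1 hb.1, fun p hp h ↦ ?_⟩
    · exact (Nat.prime_dvd_prime_iff_eq hr hp.1).1 hrp ▸ hp.2
    · exact (hp.dvd_mul.1 h).elim (ha.2 p hp) (hb.2 p hp)
  · rintro ⟨hn, h⟩
    rw [← Nat.prod_primeFactorsList hn]
    exact Submonoid.list_prod_mem _ fun p hp ↦ Submonoid.subset_closure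
      ⟨Nat.prime_of_mem_primeFactorsList hp,
        h p (Nat.prime_of_mem_primeFactorsList hp) (Nat.dvd_of_mem_primeFactorsList hp)⟩

theorem mem_factoredMonoid_of_dvd (hn : n ∈ factoredMonoid S) (h : m ∣ n) :
    m ∈ factoredMonoid S := by
  rw [mem_factoredMonoid] at hn ⊢
  exact ⟨ne_zero_of_dvd_ne_zero hn.1 h, fun p hp hpm ↦ hn.2 p hp (hpm.trans h)⟩

theorem mem_factoredMonoid_of_prime (hp : p.Prime) (hS : p ∈ S) : p ∈ factoredMonoid S :=
  Submonoid.subset_closure ⟨hp, hS⟩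

theorem factoredMonoid_mono (h : S ⊆ T) : factoredMonoid S ≤ factoredMonoid T :=
  Submonoid.closure_mono fun _ hp ↦ ⟨hp.1, h hp.2⟩

theorem exists_mul_eq_of_mem_factoredMonoid_union (hn : n ∈ factoredMonoid (S ∪ T)) :
    ∃ a ∈ factoredMonoid S, ∃ b ∈ factoredMonoid T, a * b = n := by
  rw [← Submonoid.mem_sup, factoredMonoid, factoredMonoid, ← Submonoid.closure_union]
  refine Submonoid.closure_mono ?_ hn
  rintro p ⟨hp, hpS | hpT⟩
  exacts [.inl ⟨hp, hpS⟩, .inr ⟨hp, hpT⟩]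

open scoped Classical in
/-- The integers `0 < n ≤ N` all of whose prime factors lie in `S`. -/
noncomputable def factoredUpTo (S : Set ℕ) (N : ℕ) : Finset ℕ :=
  {n ∈ Ioc 0 N | n ∈ factoredMonoid S}

theorem mem_factoredUpTo : n ∈ factoredUpTo S N ↔ n ≤ N ∧ n ∈ factoredMonoid S := by
  simp only [factoredUpTo, mem_filter, mem_Ioc, mem_factoredMonoid, Nat.pos_iff_ne_zero]
  tauto

/-- The sum of `1 / n` over the integers `0 < n ≤ N` all of whose prime factors lie in `S`. -/
noncomputable def recipSum (S : Set ℕ) (N : ℕ) : ℝ := ∑ n ∈ factoredUpTo S N, (n : ℝ)⁻¹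

theorem recipSum_nonneg (S : Set ℕ) (N : ℕ) : 0 ≤ recipSum S N :=
  sum_nonneg fun _ _ ↦ by positivity

theorem recipSum_mono (h : ∀ p : ℕ, p.Prime → p ∈ S → p ∈ T) (N : ℕ) :
    recipSum S N ≤ recipSum T N := by
  refine sum_le_sum_of_subset_of_nonneg (fun n hn ↦ ?_) fun _ _ _ ↦ by positivity
  rw [mem_factoredUpTo, mem_factoredMonoid] at hn ⊢
  exact ⟨hn.1, hn.2.1, fun p hp hpn ↦ h p hp (hn.2.2 p hp hpn)⟩

theorem recipSum_union_le (S T : Set ℕ) (N : ℕ) :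
    recipSum (S ∪ T) N ≤ recipSum S N * recipSum T N := by
  let mulPair (x : ℕ × ℕ) : ℕ := x.1 * x.2
  have hsub : factoredUpTo (S ∪ T) N ⊆ (factoredUpTo S N ×ˢ factoredUpTo T N).image mulPair := by
    intro n hn
    rw [mem_factoredUpTo] at hn
    obtain ⟨a, ha, b, hb, rfl⟩ := exists_mul_eq_of_mem_factoredMonoid_union hn.2
    have ha0 := (mem_factoredMonoid.1 ha).1
    have hb0 := (mem_factoredMonoid.1 hb).1
    refine mem_image.2 ⟨(a, b), mem_product.2 ⟨mem_factoredUpTo.2 ⟨?_, ha⟩,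
      mem_factoredUpTo.2 ⟨?_, hb⟩⟩, rfl⟩
    exacts [(Nat.le_mul_of_pos_right a hb0.pos).trans hn.1,
      (Nat.le_mul_of_pos_left b ha0.pos).trans hn.1]
  calc recipSum (S ∪ T) N
      ≤ ∑ n ∈ (factoredUpTo S N ×ˢ factoredUpTo T N).image mulPair, (n : ℝ)⁻¹ :=
        sum_le_sum_of_subset_of_nonneg hsub fun _ _ _ ↦ by positivity
    _ ≤ ∑ x ∈ factoredUpTo S N ×ˢ factoredUpTo T N, (mulPair x : ℝ)⁻¹ :=
        sum_image_le_of_nonneg fun _ _ ↦ by positivity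
    _ = recipSum S N * recipSum T N := by
        simp only [mulPair, Nat.cast_mul, mul_inv, recipSum, sum_mul_sum, sum_product]

theorem recipSum_coe_le_prod (T : Finset ℕ) (N : ℕ) :
    recipSum T N ≤ ∏ p ∈ T with p.Prime, (1 - (p : ℝ)⁻¹)⁻¹ := by
  let inv : ℕ →* ℝ := ⟨⟨fun n ↦ (n : ℝ)⁻¹, by simp⟩, fun m n ↦ by simp [mul_comm]⟩
  have hinv {p : ℕ} (hp : p.Prime) : ‖inv p‖ < 1 := by
    rw [show inv p = (p : ℝ)⁻¹ from rfl, norm_inv, RCLike.norm_natCast]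
    exact inv_lt_one_of_one_lt₀ (Nat.one_lt_cast.2 hp.one_lt)
  have hsum := hasSum_subtype_iff_indicator.1
    (EulerProduct.summable_and_hasSum_factoredNumbers_prod_filter_prime_geometric hinv T).2
  refine (sum_congr rfl fun n hn ↦ ?_).trans_le <|
    sum_le_hasSum (factoredUpTo T N)
      (fun n _ ↦ Set.indicator_nonneg (fun n _ ↦ inv_nonneg.2 n.cast_nonneg) n) hsum
  rw [mem_factoredUpTo, mem_factoredMonoid] at hn
  exact (Set.indicator_of_mem (s := Nat.factoredNumbers T) (Nat.mem_factoredNumbers'.2 hn.2.2)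
    fun n ↦ inv n).symm

theorem exists_forall_recipSum_le_mul_recipSum_diff (S : Set ℕ) (T : Finset ℕ) :
    ∃ C > 0, ∀ N, recipSum S N ≤ C * recipSum (S \ T) N := by
  refine ⟨∏ p ∈ T with p.Prime, (1 - (p : ℝ)⁻¹)⁻¹, prod_pos fun p hp ↦ ?_, fun N ↦ ?_⟩
  · exact inv_pos.2 (sub_pos.2 (inv_lt_one_of_one_lt₀
      (Nat.one_lt_cast.2 (mem_filter.1 hp).2.one_lt)))
  calc recipSum S N ≤ recipSum (T ∪ S \ T) N :=
        recipSum_mono (fun p _ hp ↦ by simpa only [Set.union_sdiff_self] using .inr hp) N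
    _ ≤ recipSum T N * recipSum (S \ T) N := recipSum_union_le _ _ N
    _ ≤ _ := by
        gcongr
        exacts [recipSum_nonneg _ N, recipSum_coe_le_prod T N]

theorem log_le_recipSum_univ (N : ℕ) : Real.log N ≤ recipSum Set.univ N := by
  have huniv : factoredUpTo Set.univ N = Icc 1 N := by
    ext n
    simp [mem_factoredUpTo, mem_factoredMonoid, Nat.one_le_iff_ne_zero, and_comm]
  rcases N.eq_zero_or_pos with rfl | hN
  · simp [recipSum_nonneg]
  calc Real.log N ≤ Real.log (N + 1 : ℕ) := by gcongr; lia
    _ ≤ harmonic N := log_add_one_le_harmonic N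
    _ = recipSum Set.univ N := by simp [recipSum, huniv, harmonic_eq_sum_Icc]

end PrescribedPrimes

section QuadraticCharacters

variable {S : Set ℕ} {q : ℕ} {χ : DirichletCharacter ℝ q} {n : ℕ}

/-- The indicator function of `factoredMonoid S`, as an arithmetic function. -/
noncomputable def factoredIndicator (S : Set ℕ) : ArithmeticFunction ℝ :=
  toArithmeticFunction ((factoredMonoid S : Set ℕ).indicator 1)

theorem factoredIndicator_of_mem (hn : n ∈ factoredMonoid S) : factoredIndicator S n = 1 := by
  simp [factoredIndicator, toArithmeticFunction, hn, (mem_factoredMonoid.1 hn).1]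

theorem factoredIndicator_of_notMem (hn : n ∉ factoredMonoid S) : factoredIndicator S n = 0 := by
  simp [factoredIndicator, toArithmeticFunction, hn]

theorem factoredIndicator_nonneg (S : Set ℕ) (n : ℕ) : 0 ≤ factoredIndicator S n := by
  by_cases hn : n ∈ factoredMonoid S
  · simp [factoredIndicator_of_mem hn]
  · simp [factoredIndicator_of_notMem hn]

theorem isMultiplicative_factoredIndicator (S : Set ℕ) :
    (factoredIndicator S).IsMultiplicative := by
  refine ⟨factoredIndicator_of_mem (one_mem _), fun {m n} _ ↦ ?_⟩
  by_cases hm : m ∈ factoredMonoid S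
  · by_cases hn : n ∈ factoredMonoid S
    · simp [factoredIndicator_of_mem, hm, hn, mul_mem hm hn]
    · rw [factoredIndicator_of_notMem hn, mul_zero, factoredIndicator_of_notMem
        fun h ↦ hn (mem_factoredMonoid_of_dvd h (dvd_mul_left n m))]
  · rw [factoredIndicator_of_notMem hm, zero_mul, factoredIndicator_of_notMem
      fun h ↦ hm (mem_factoredMonoid_of_dvd h (dvd_mul_right m n))]

theorem sum_factoredIndicator_mul_inv (S : Set ℕ) (N : ℕ) :
    ∑ n ∈ Ioc 0 N, factoredIndicator S n * (n : ℝ)⁻¹ = recipSum S N := by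
  classical
  rw [recipSum, factoredUpTo, sum_filter]
  refine sum_congr rfl fun n _ ↦ ?_
  split_ifs with hn
  · rw [factoredIndicator_of_mem hn, one_mul]
  · rw [factoredIndicator_of_notMem hn, zero_mul]

/-- The Dirichlet convolution of a real character `χ` with the indicator function of the integers
whose prime factors all satisfy `χ p = -1`. For quadratic `χ`, its Euler factor at such a prime is
that of `ζ(2s)`, and that at the primes with `χ p = 1` is that of `ζ(s)`. -/
noncomputable def negOneMul (χ : DirichletCharacter ℝ q) : ArithmeticFunction ℝ :=
  factoredIndicator {p | χ p = -1} * toArithmeticFunction (χ ·)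

theorem negOneMul_apply (χ : DirichletCharacter ℝ q) (n : ℕ) :
    negOneMul χ n =
      ∑ x ∈ n.divisorsAntidiagonal, factoredIndicator {p | χ p = -1} x.1 * χ x.2 := by
  rw [negOneMul, ArithmeticFunction.mul_apply]
  refine sum_congr rfl fun x hx ↦ ?_
  rw [DirichletCharacter.apply_eq_toArithmeticFunction_apply χ
    (Nat.ne_zero_of_mem_divisorsAntidiagonal hx).2]

theorem negOneMul_prime_pow_nonneg (hχ : χ.IsQuadratic) {p : ℕ} (hp : p.Prime) (k : ℕ) :
    0 ≤ negOneMul χ (p ^ k) := by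
  rw [negOneMul_apply]
  by_cases hneg : χ p = -1
  · have hone {x : ℕ × ℕ} (hx : x ∈ (p ^ k).divisorsAntidiagonal) :
        factoredIndicator {p | χ p = -1} x.1 = 1 :=
      factoredIndicator_of_mem <| mem_factoredMonoid_of_dvd
        (pow_mem (mem_factoredMonoid_of_prime hp hneg) k)
        (Nat.dvd_of_mem_divisors (Nat.fst_mem_divisors_of_mem_antidiagonal hx))
    rw [sum_congr rfl fun x hx ↦ by rw [hone hx, one_mul],
      Nat.sum_divisorsAntidiagonal' fun _ b ↦ χ b, Nat.sum_divisors_prime_pow hp]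
    simp only [Nat.cast_pow, map_pow, hneg, neg_one_geom_sum]
    split_ifs
    exacts [le_rfl, zero_le_one]
  · have hnonneg : 0 ≤ χ p := by
      rcases hχ p with h | h | h
      exacts [h.ge, h.symm ▸ zero_le_one, (hneg h).elim]
    refine sum_nonneg fun x hx ↦ mul_nonneg (factoredIndicator_nonneg _ _) ?_
    obtain ⟨i, -, hi⟩ := (Nat.dvd_prime_pow hp).1
      (Nat.dvd_of_mem_divisors (Nat.snd_mem_divisors_of_mem_antidiagonal hx))
    rw [hi, Nat.cast_pow, map_pow]
    exact pow_nonneg hnonneg i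

theorem negOneMul_nonneg (hχ : χ.IsQuadratic) (n : ℕ) : 0 ≤ negOneMul χ n := by
  rcases eq_or_ne n 0 with rfl | hn
  · exact (ArithmeticFunction.map_zero (f := negOneMul χ)).ge
  have hmul : (negOneMul χ).IsMultiplicative := (isMultiplicative_factoredIndicator _).mul
    (DirichletCharacter.isMultiplicative_toArithmeticFunction χ)
  rw [hmul.multiplicative_factorization _ hn]
  exact prod_nonneg fun p hp ↦ negOneMul_prime_pow_nonneg hχ (Nat.prime_of_mem_primeFactors hp) _

theorem apply_eq_one_of_mem_factoredMonoid (hn : n ∈ factoredMonoid {p | χ p = 1}) : χ n = 1 := by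
  induction hn using Submonoid.closure_induction with
  | mem p hp => exact hp.2
  | one => rw [Nat.cast_one, map_one]
  | mul a b _ _ ha hb => rw [Nat.cast_mul, map_mul, ha, hb, one_mul]

theorem one_le_negOneMul (hn : n ∈ factoredMonoid {p | χ p = 1}) : 1 ≤ negOneMul χ n := by
  have hχ {x : ℕ × ℕ} (hx : x ∈ n.divisorsAntidiagonal) : χ x.2 = 1 :=
    apply_eq_one_of_mem_factoredMonoid <| mem_factoredMonoid_of_dvd hn
      (Nat.dvd_of_mem_divisors (Nat.snd_mem_divisors_of_mem_antidiagonal hx))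
  have hmem : (1, n) ∈ n.divisorsAntidiagonal := by simp [(mem_factoredMonoid.1 hn).1]
  rw [negOneMul_apply, sum_congr rfl fun x hx ↦ by rw [hχ hx, mul_one]]
  exact (factoredIndicator_of_mem (one_mem _)).ge.trans <|
    single_le_sum (f := fun x : ℕ × ℕ ↦ factoredIndicator {p | χ p = -1} x.1)
      (fun x _ ↦ factoredIndicator_nonneg _ _) hmem

theorem sum_Ioc_negOneMul_mul_inv_le [NeZero q] (hχ : χ ≠ 1) (N : ℕ) :
    ∑ n ∈ Ioc 0 N, negOneMul χ n * (n : ℝ)⁻¹ ≤ q * recipSum {p | χ p = -1} N := by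
  let S : Set ℕ := {p | χ p = -1}
  calc ∑ n ∈ Ioc 0 N, negOneMul χ n * (n : ℝ)⁻¹
      = ∑ n ∈ Ioc 0 N, ∑ x ∈ n.divisorsAntidiagonal,
          factoredIndicator S x.1 * (x.1 : ℝ)⁻¹ * ((x.2 : ℝ)⁻¹ • χ x.2) := by
        refine sum_congr rfl fun n _ ↦ ?_
        rw [negOneMul_apply, sum_mul]
        refine sum_congr rfl fun x hx ↦ ?_
        rw [← (Nat.mem_divisorsAntidiagonal.1 hx).1, Nat.cast_mul, mul_inv, smul_eq_mul]
        ring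
    _ = ∑ d ∈ Ioc 0 N, factoredIndicator S d * (d : ℝ)⁻¹ *
          ∑ e ∈ Ioc 0 (N / d), (e : ℝ)⁻¹ • χ e := by
        simp only [sum_Ioc_sum_divisorsAntidiagonal fun d e ↦
          factoredIndicator S d * (d : ℝ)⁻¹ * ((e : ℝ)⁻¹ • χ e), mul_sum]
    _ ≤ ∑ d ∈ Ioc 0 N, factoredIndicator S d * (d : ℝ)⁻¹ * q := by
        gcongr with d
        · exact mul_nonneg (factoredIndicator_nonneg S d) (by positivity)
        · exact (Real.le_norm_self _).trans (norm_sum_Ioc_inv_smul_dirichletCharacter_le hχ _)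
    _ = q * recipSum S N := by rw [← sum_mul, sum_factoredIndicator_mul_inv, mul_comm]

theorem recipSum_one_le_mul_recipSum_neg_one [NeZero q] (hquad : χ.IsQuadratic) (hχ : χ ≠ 1)
    (N : ℕ) : recipSum {p | χ p = 1} N ≤ q * recipSum {p | χ p = -1} N := by
  rw [← sum_factoredIndicator_mul_inv]
  refine le_trans (sum_le_sum fun n _ ↦ ?_) (sum_Ioc_negOneMul_mul_inv_le hχ N)
  gcongr
  by_cases hn : n ∈ factoredMonoid {p | χ p = 1}
  · exact (factoredIndicator_of_mem hn).trans_le (one_le_negOneMul hn)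
  · exact (factoredIndicator_of_notMem hn).trans_le (negOneMul_nonneg hquad n)

theorem isUnit_natCast_of_prime_of_notMem_primeFactors [NeZero q] {p : ℕ} (hp : p.Prime)
    (hpq : p ∉ q.primeFactors) : IsUnit (p : ZMod q) :=
  (ZMod.isUnit_iff_coprime p q).2 <| (hp.coprime_iff_not_dvd).2 fun h ↦
    hpq (Nat.mem_primeFactors.2 ⟨hp, h, NeZero.ne q⟩)

-- All but finitely many primes have `χ p = ±1`, so up to a constant the harmonic sum is at most
-- the product of the sums over `χ = 1` and `χ = -1`, and the former is dominated by the latter.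
theorem exists_forall_log_le_recipSum_neg_one_sq [NeZero q] (hquad : χ.IsQuadratic) (hχ : χ ≠ 1)
    (T : Finset ℕ) :
    ∃ c > 0, ∀ N : ℕ, c * Real.log N ≤ recipSum ({p | χ p = -1} \ T) N ^ 2 := by
  obtain ⟨A, hA, hAle⟩ := exists_forall_recipSum_le_mul_recipSum_diff Set.univ q.primeFactors
  obtain ⟨C, hC, hCle⟩ := exists_forall_recipSum_le_mul_recipSum_diff {p | χ p = -1} T
  have hq : (0 : ℝ) < q := Nat.cast_pos.2 (NeZero.pos q)
  refine ⟨(A * q * C ^ 2)⁻¹, by positivity, fun N ↦ ?_⟩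
  have hunion : recipSum (Set.univ \ q.primeFactors) N ≤
      recipSum ({p | χ p = 1} ∪ {p | χ p = -1}) N :=
    recipSum_mono (fun p hp hpq ↦ (hquad p).resolve_left
      ((isUnit_natCast_of_prime_of_notMem_primeFactors hp hpq.2).map χ).ne_zero) N
  have hneg := recipSum_nonneg {p | χ p = -1} N
  rw [inv_mul_le_iff₀ (by positivity)]
  calc Real.log N ≤ A * (recipSum {p | χ p = 1} N * recipSum {p | χ p = -1} N) :=
        (log_le_recipSum_univ N).trans <| (hAle N).trans <|
          mul_le_mul_of_nonneg_left (hunion.trans (recipSum_union_le _ _ N)) hA.le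
    _ ≤ A * (q * recipSum {p | χ p = -1} N * recipSum {p | χ p = -1} N) := by
        gcongr
        exact recipSum_one_le_mul_recipSum_neg_one hquad hχ N
    _ = A * q * recipSum {p | χ p = -1} N ^ 2 := by ring
    _ ≤ A * q * (C * recipSum ({p | χ p = -1} \ T) N) ^ 2 := by gcongr; exact hCle N
    _ = A * q * C ^ 2 * recipSum ({p | χ p = -1} \ T) N ^ 2 := by ring

end QuadraticCharacters

section CoprimePairs

variable {S : Set ℕ} {M N a n : ℕ}

/-- The integers `0 < b ≤ N` prime to `a` all of whose prime factors lie in `S`. -/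
noncomputable def coprimeFactoredUpTo (S : Set ℕ) (a N : ℕ) : Finset ℕ :=
  {b ∈ factoredUpTo S N | a.Coprime b}

theorem mem_coprimeFactoredUpTo :
    n ∈ coprimeFactoredUpTo S a N ↔ n ∈ factoredUpTo S N ∧ a.Coprime n := mem_filter

/-- The pairs of coprime integers in `[1, N]` all of whose prime factors lie in `S`. -/
noncomputable def coprimePairs (S : Set ℕ) (N : ℕ) : Finset (ℕ × ℕ) :=
  {x ∈ factoredUpTo S N ×ˢ factoredUpTo S N | x.1.Coprime x.2}

theorem mem_coprimePairs {x : ℕ × ℕ} : x ∈ coprimePairs S N ↔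
    (x.1 ∈ factoredUpTo S N ∧ x.2 ∈ factoredUpTo S N) ∧ x.1.Coprime x.2 := by
  rw [coprimePairs, mem_filter, mem_product]

theorem sum_coprimePairs (S : Set ℕ) (N : ℕ) (f : ℕ → ℕ → ℝ) :
    ∑ x ∈ coprimePairs S N, f x.1 x.2 =
      ∑ a ∈ factoredUpTo S N, ∑ b ∈ coprimeFactoredUpTo S a N, f a b := by
  simp only [coprimePairs, coprimeFactoredUpTo, sum_filter, sum_product]

theorem sum_gcd_eq_le {g : ℕ} (hg : 0 < g) (S : Set ℕ) (N : ℕ) :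
    ∑ x ∈ factoredUpTo S N ×ˢ factoredUpTo S N with x.1.gcd x.2 = g, (x.1 : ℝ)⁻¹ * (x.2 : ℝ)⁻¹ ≤
      ((g : ℝ) ^ 2)⁻¹ * ∑ x ∈ coprimePairs S N, (x.1 : ℝ)⁻¹ * (x.2 : ℝ)⁻¹ := by
  let scale (x : ℕ × ℕ) : ℕ × ℕ := (g * x.1, g * x.2)
  have hsub : {x ∈ factoredUpTo S N ×ˢ factoredUpTo S N | x.1.gcd x.2 = g} ⊆
      (coprimePairs S N).image scale := by
    rintro ⟨a, b⟩ hx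
    obtain ⟨hmem, rfl⟩ := mem_filter.1 hx
    have hdiv {d m : ℕ} (hd : d ∣ m) (hm : m ∈ factoredUpTo S N) : m / d ∈ factoredUpTo S N :=
      mem_factoredUpTo.2 ⟨(Nat.div_le_self m d).trans (mem_factoredUpTo.1 hm).1,
        mem_factoredMonoid_of_dvd (mem_factoredUpTo.1 hm).2 (Nat.div_dvd_of_dvd hd)⟩
    have ha := Nat.gcd_dvd_left a b
    have hb := Nat.gcd_dvd_right a b
    rw [mem_product] at hmem
    exact mem_image.2 ⟨(a / a.gcd b, b / a.gcd b), mem_coprimePairs.2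
      ⟨⟨hdiv ha hmem.1, hdiv hb hmem.2⟩, Nat.coprime_div_gcd_div_gcd hg⟩,
      Prod.ext (Nat.mul_div_cancel' ha) (Nat.mul_div_cancel' hb)⟩
  calc _ ≤ ∑ x ∈ (coprimePairs S N).image scale, (x.1 : ℝ)⁻¹ * (x.2 : ℝ)⁻¹ :=
        sum_le_sum_of_subset_of_nonneg hsub fun _ _ _ ↦ by positivity
    _ ≤ ∑ x ∈ coprimePairs S N, ((scale x).1 : ℝ)⁻¹ * ((scale x).2 : ℝ)⁻¹ :=
        sum_image_le_of_nonneg fun _ _ ↦ by positivity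
    _ = _ := by
        rw [mul_sum]
        refine sum_congr rfl fun x _ ↦ ?_
        push_cast [scale]
        ring

theorem recipSum_sq_le_two_mul_sum_coprimePairs (S : Set ℕ) (N : ℕ) :
    recipSum S N ^ 2 ≤ 2 * ∑ x ∈ coprimePairs S N, (x.1 : ℝ)⁻¹ * (x.2 : ℝ)⁻¹ := by
  have hgcd : ∀ x ∈ factoredUpTo S N ×ˢ factoredUpTo S N, x.1.gcd x.2 ∈ Ioc 0 N := by
    intro x hx
    obtain ⟨hle, hmem⟩ := mem_factoredUpTo.1 (mem_product.1 hx).1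
    have hpos := (mem_factoredMonoid.1 hmem).1.pos
    exact mem_Ioc.2 ⟨Nat.gcd_pos_of_pos_left _ hpos, (Nat.gcd_le_left _ hpos).trans hle⟩
  have hsq : ∑ g ∈ Ioc 0 N, ((g : ℝ) ^ 2)⁻¹ ≤ 2 := by
    simpa [← Ioo_add_one_right_eq_Ioc] using sum_Ioo_inv_sq_le (α := ℝ) 0 (N + 1)
  calc recipSum S N ^ 2
      = ∑ g ∈ Ioc 0 N, ∑ x ∈ factoredUpTo S N ×ˢ factoredUpTo S N with x.1.gcd x.2 = g,
          (x.1 : ℝ)⁻¹ * (x.2 : ℝ)⁻¹ := by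
        rw [sum_fiberwise_of_maps_to hgcd, sq, recipSum, sum_mul_sum, sum_product]
    _ ≤ ∑ g ∈ Ioc 0 N, ((g : ℝ) ^ 2)⁻¹ * ∑ x ∈ coprimePairs S N, (x.1 : ℝ)⁻¹ * (x.2 : ℝ)⁻¹ :=
        sum_le_sum fun g hg ↦ sum_gcd_eq_le (mem_Ioc.1 hg).1 S N
    _ ≤ _ := by
        rw [← sum_mul]
        gcongr

theorem sum_primeFactors_log_le_log (n : ℕ) : ∑ p ∈ n.primeFactors, Real.log p ≤ Real.log n := by
  rcases n.eq_zero_or_pos with rfl | hn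
  · simp
  have hne : ∀ p ∈ n.primeFactors, (p : ℝ) ≠ 0 := fun p hp ↦
    Nat.cast_ne_zero.2 (Nat.prime_of_mem_primeFactors hp).ne_zero
  rw [← Real.log_prod hne, ← Nat.cast_prod]
  gcongr
  · exact Nat.cast_pos.2 (prod_pos fun p hp ↦ (Nat.prime_of_mem_primeFactors hp).pos)
  · exact Nat.le_of_dvd hn (Nat.prod_primeFactors_dvd n)

theorem mul_mem_coprimeFactoredUpTo (ha : a ≠ 0) (hn : n ∈ coprimeFactoredUpTo S a M)
    {p : ℕ} (hp : p ∈ primesIn (S \ a.primeFactors) (N / n)) :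
    n * p ∈ coprimeFactoredUpTo S a N := by
  rw [mem_coprimeFactoredUpTo, mem_factoredUpTo] at hn ⊢
  obtain ⟨hpN, hp, hpS, hpa⟩ := mem_primesIn.1 hp
  have hap : a.Coprime p :=
    (hp.coprime_iff_not_dvd.2 fun h ↦ hpa (Nat.mem_primeFactors.2 ⟨hp, h, ha⟩)).symm
  refine ⟨⟨?_, mul_mem hn.1.2 (mem_factoredMonoid_of_prime hp hpS)⟩, hn.2.mul_right hap⟩
  rw [mul_comm]
  exact (Nat.le_div_iff_mul_le (mem_factoredMonoid.1 hn.1.2).1.pos).1 hpN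

-- The pairs `(n, p)` on the left inject via `(n, p) ↦ (n * p, p)` into the pairs `(b, p)` with
-- `p ∣ b`, and the primes dividing a given `b ≤ N` contribute at most `log N`.
theorem sum_sum_primesIn_log_le_card_mul_log (ha : a ≠ 0) (S : Set ℕ) (M N : ℕ) :
    ∑ n ∈ coprimeFactoredUpTo S a M, ∑ p ∈ primesIn (S \ a.primeFactors) (N / n), Real.log p ≤
      #(coprimeFactoredUpTo S a N) * Real.log N := by
  let timesPrime (x : (_ : ℕ) × ℕ) : (_ : ℕ) × ℕ := ⟨x.1 * x.2, x.2⟩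
  let pairs := (coprimeFactoredUpTo S a M).sigma fun n ↦ primesIn (S \ a.primeFactors) (N / n)
  have hmaps : pairs.image timesPrime ⊆ (coprimeFactoredUpTo S a N).sigma Nat.primeFactors := by
    refine image_subset_iff.2 fun ⟨n, p⟩ hx ↦ ?_
    obtain ⟨hn, hp⟩ := mem_sigma.1 hx
    have hnp := mul_mem_coprimeFactoredUpTo ha hn hp
    have hne := (mem_factoredMonoid.1 (mem_factoredUpTo.1 (mem_coprimeFactoredUpTo.1 hnp).1).2).1
    exact mem_sigma.2 ⟨hnp, Nat.mem_primeFactors.2 ⟨(mem_primesIn.1 hp).2.1, dvd_mul_left p n, hne⟩⟩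
  have hinj : Set.InjOn timesPrime pairs := by
    rintro ⟨n, p⟩ hx ⟨m, r⟩ - h
    obtain ⟨hnm, rfl⟩ : n * p = m * r ∧ p = r := by simpa [timesPrime] using h
    have hp := (mem_primesIn.1 (mem_sigma.1 hx).2).2.1
    rw [Nat.eq_of_mul_eq_mul_right hp.pos hnm]
  calc _ = ∑ x ∈ pairs.image timesPrime, Real.log x.2 := by rw [sum_image hinj, sum_sigma]
    _ ≤ ∑ x ∈ (coprimeFactoredUpTo S a N).sigma Nat.primeFactors, Real.log x.2 :=
        sum_le_sum_of_subset_of_nonneg hmaps fun x _ _ ↦ Real.log_natCast_nonneg x.2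
    _ = ∑ b ∈ coprimeFactoredUpTo S a N, ∑ p ∈ b.primeFactors, Real.log p := sum_sigma ..
    _ ≤ #(coprimeFactoredUpTo S a N) * Real.log N := by
        rw [← nsmul_eq_mul]
        refine sum_le_card_nsmul _ _ _ fun b hb ↦ (sum_primeFactors_log_le_log b).trans ?_
        obtain ⟨hbN, hb⟩ := mem_factoredUpTo.1 (mem_coprimeFactoredUpTo.1 hb).1
        have := (mem_factoredMonoid.1 hb).1.pos
        gcongr

theorem eventually_log_natCast_add_le_mul_sqrt {c : ℝ} (hc : 0 < c) (C : ℝ) :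
    ∀ᶠ N : ℕ in atTop, Real.log N + C ≤ c * √N := by
  have hlog : (fun x : ℝ ↦ Real.log x + C) =o[atTop] Real.sqrt := by
    rw [funext Real.sqrt_eq_rpow]
    exact (isLittleO_log_rpow_atTop (by norm_num)).add
      (Asymptotics.isLittleO_const_left.2 (.inr (tendsto_norm_atTop_atTop.comp
        (tendsto_rpow_atTop (by norm_num)))))
  filter_upwards [tendsto_natCast_atTop_atTop.eventually (hlog.bound hc)] with N hN
  simpa only [Real.norm_of_nonneg (Real.sqrt_nonneg _)] using (Real.le_norm_self _).trans hN

theorem eventually_mul_inv_le_sum_primesIn_diff_log {c : ℝ} (hc : 0 < c)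
    (hS : ∀ᶠ N : ℕ in atTop, c * N ≤ ∑ p ∈ primesIn S N, Real.log p) :
    ∀ᶠ N : ℕ in atTop, ∀ a n : ℕ, a ≤ N → n ≠ 0 → n ≤ N.sqrt →
      c / 2 * N * (n : ℝ)⁻¹ ≤ ∑ p ∈ primesIn (S \ a.primeFactors) (N / n), Real.log p := by
  obtain ⟨N₀, hN₀⟩ := eventually_atTop.1 hS
  filter_upwards [eventually_log_natCast_add_le_mul_sqrt (half_pos hc) c,
    eventually_ge_atTop (N₀ ^ 2)] with N hlog hN a n haN hn hnN
  have hn0 : (0 : ℝ) < n := Nat.cast_pos.2 hn.pos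
  have hsqrt_le : N.sqrt ≤ N / n := (Nat.le_div_iff_mul_le hn.pos).2
    ((Nat.mul_le_mul_left _ hnN).trans N.sqrt_le)
  have hθ : c * (N / n) - c ≤ ∑ p ∈ primesIn S (N / n), Real.log p := by
    have := hN₀ (N / n) ((Nat.le_sqrt'.2 hN).trans hsqrt_le)
    nlinarith [natCast_div_lt_natCast_div_add_one N n]
  have hloga : ∑ p ∈ a.primeFactors, Real.log p ≤ Real.log N := by
    rcases a.eq_zero_or_pos with rfl | ha
    · simpa using Real.log_natCast_nonneg N
    · exact (sum_primeFactors_log_le_log a).trans (by gcongr)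
  have hsqrt : √N ≤ N / n := by
    rw [le_div_iff₀ hn0]
    calc √N * n ≤ √N * √N := by gcongr; exact (Nat.cast_le.2 hnN).trans Real.nat_sqrt_le_real_sqrt
      _ = N := Real.mul_self_sqrt N.cast_nonneg
  have hdiff := sum_primesIn_le_sum_primesIn_diff_add (fun n : ℕ ↦ Real.log_natCast_nonneg n)
    S a.primeFactors (N / n)
  have : c / 2 * √N ≤ c / 2 * (N / n) := by gcongr
  rw [mul_assoc, ← div_eq_mul_inv]
  linarith

theorem eventually_mul_sum_inv_le_card_mul_log {c : ℝ} (hc : 0 < c)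
    (hS : ∀ᶠ N : ℕ in atTop, c * N ≤ ∑ p ∈ primesIn S N, Real.log p) :
    ∀ᶠ N : ℕ in atTop, ∀ a ∈ factoredUpTo S N,
      c / 2 * N * ∑ n ∈ coprimeFactoredUpTo S a N.sqrt, (n : ℝ)⁻¹ ≤
        #(coprimeFactoredUpTo S a N) * Real.log N := by
  filter_upwards [eventually_mul_inv_le_sum_primesIn_diff_log hc hS] with N hN a ha
  rw [mem_factoredUpTo] at ha
  refine le_trans ?_ (sum_sum_primesIn_log_le_card_mul_log (mem_factoredMonoid.1 ha.2).1 S N.sqrt N)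
  rw [mul_sum]
  refine sum_le_sum fun n hn ↦ ?_
  obtain ⟨hnN, hn⟩ := mem_factoredUpTo.1 (mem_coprimeFactoredUpTo.1 hn).1
  exact hN a n ha.1 (mem_factoredMonoid.1 hn).1 hnN

theorem sq_mul_sum_coprimePairs_le_card_mul_sq (hMN : M ≤ N) {k L : ℝ} (hk : 0 ≤ k) (hL : 0 ≤ L)
    (h : ∀ a ∈ factoredUpTo S N, k * ∑ n ∈ coprimeFactoredUpTo S a M, (n : ℝ)⁻¹ ≤
      #(coprimeFactoredUpTo S a N) * L) :
    k ^ 2 * ∑ x ∈ coprimePairs S M, (x.1 : ℝ)⁻¹ * (x.2 : ℝ)⁻¹ ≤ #(coprimePairs S N) * L ^ 2 := by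
  have hsub : factoredUpTo S M ⊆ factoredUpTo S N := fun n hn ↦
    mem_factoredUpTo.2 ((mem_factoredUpTo.1 hn).imp_left hMN.trans')
  have hswap : ∑ a ∈ factoredUpTo S M, (a : ℝ)⁻¹ * #(coprimeFactoredUpTo S a N) =
      ∑ b ∈ factoredUpTo S N, ∑ a ∈ coprimeFactoredUpTo S b M, (a : ℝ)⁻¹ := by
    simp only [mul_comm _ (#_ : ℝ), ← nsmul_eq_mul, ← sum_const]
    refine sum_comm' fun a b ↦ ?_
    simp only [mem_coprimeFactoredUpTo, Nat.coprime_comm]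
    tauto
  have hcard : ∑ b ∈ factoredUpTo S N, (#(coprimeFactoredUpTo S b N) : ℝ) =
      #(coprimePairs S N) := by
    simpa using (sum_coprimePairs S N fun _ _ ↦ 1).symm
  calc k ^ 2 * ∑ x ∈ coprimePairs S M, (x.1 : ℝ)⁻¹ * (x.2 : ℝ)⁻¹
      = k * ∑ a ∈ factoredUpTo S M,
          (a : ℝ)⁻¹ * (k * ∑ b ∈ coprimeFactoredUpTo S a M, (b : ℝ)⁻¹) := by
        rw [sum_coprimePairs S M fun a b ↦ (a : ℝ)⁻¹ * (b : ℝ)⁻¹]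
        simp only [mul_sum]
        refine sum_congr rfl fun a _ ↦ sum_congr rfl fun b _ ↦ by ring
    _ ≤ k * ∑ a ∈ factoredUpTo S M, (a : ℝ)⁻¹ * (#(coprimeFactoredUpTo S a N) * L) := by
        refine mul_le_mul_of_nonneg_left (sum_le_sum fun a ha ↦ ?_) hk
        exact mul_le_mul_of_nonneg_left (h a (hsub ha)) (by positivity)
    _ = ∑ b ∈ factoredUpTo S N, (k * ∑ a ∈ coprimeFactoredUpTo S b M, (a : ℝ)⁻¹) * L := by
        simp only [← mul_assoc, ← sum_mul, hswap, ← mul_sum]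
    _ ≤ ∑ b ∈ factoredUpTo S N, #(coprimeFactoredUpTo S b N) * L * L :=
        sum_le_sum fun b hb ↦ mul_le_mul_of_nonneg_right (h b hb) hL
    _ = #(coprimePairs S N) * L ^ 2 := by rw [← sum_mul, ← sum_mul, hcard]; ring

theorem log_le_four_mul_log_sqrt (hN : 4 ≤ N) : Real.log N ≤ 4 * Real.log N.sqrt := by
  have hsqrt : 2 ≤ N.sqrt := Nat.le_sqrt'.2 hN
  have hN4 : N ≤ N.sqrt ^ 4 := by
    have := Nat.lt_succ_sqrt' N
    nlinarith [Nat.pow_le_pow_left hsqrt 2]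
  calc Real.log N ≤ Real.log (N.sqrt ^ 4 : ℕ) := by gcongr
    _ = 4 * Real.log N.sqrt := by rw [Nat.cast_pow, Real.log_pow, Nat.cast_ofNat]

theorem exists_forall_mul_sq_div_log_le_card_coprimePairs
    (hθ : ∃ c > 0, ∀ᶠ N : ℕ in atTop, c * N ≤ ∑ p ∈ primesIn S N, Real.log p)
    (hrecip : ∃ c > 0, ∀ N : ℕ, c * Real.log N ≤ recipSum S N ^ 2) :
    ∃ c > 0, ∀ᶠ N : ℕ in atTop, c * (N : ℝ) ^ 2 / Real.log N ≤ #(coprimePairs S N) := by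
  obtain ⟨c, hc, hθ⟩ := hθ
  obtain ⟨d, hd, hrecip⟩ := hrecip
  refine ⟨c ^ 2 * d / 32, by positivity, ?_⟩
  filter_upwards [eventually_mul_sum_inv_le_card_mul_log hc hθ, eventually_ge_atTop 4] with N hN hN4
  have hlog : 0 < Real.log N := Real.log_pos (Nat.one_lt_cast.2 (by lia))
  have hpairs := sq_mul_sum_coprimePairs_le_card_mul_sq N.sqrt_le_self (by positivity) hlog.le hN
  set P := ∑ x ∈ coprimePairs S N.sqrt, (x.1 : ℝ)⁻¹ * (x.2 : ℝ)⁻¹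
  have hP : d / 8 * Real.log N ≤ P := by
    nlinarith [recipSum_sq_le_two_mul_sum_coprimePairs S N.sqrt, hrecip N.sqrt,
      log_le_four_mul_log_sqrt hN4]
  rw [div_le_iff₀ hlog]
  refine le_of_mul_le_mul_right ?_ hlog
  calc c ^ 2 * d / 32 * N ^ 2 * Real.log N = (c / 2 * N) ^ 2 * (d / 8 * Real.log N) := by ring
    _ ≤ (c / 2 * N) ^ 2 * P := by gcongr
    _ ≤ #(coprimePairs S N) * Real.log N * Real.log N := by rwa [mul_assoc, ← sq]

end CoprimePairs

section QuadraticNonresidues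

variable {q : ℕ} {χ : DirichletCharacter ℝ q}

theorem exists_isUnit_apply_eq_neg_one (hquad : χ.IsQuadratic) (hχ : χ ≠ 1) :
    ∃ a : ZMod q, IsUnit a ∧ χ a = -1 := by
  obtain ⟨a, ha⟩ := MulChar.ne_one_iff.1 hχ
  exact ⟨a, a.isUnit, ((hquad a).resolve_left (a.isUnit.map χ).ne_zero).resolve_left ha⟩

theorem exists_forall_mul_sq_div_log_le_card_coprimePairs_neg_one [NeZero q]
    (hquad : χ.IsQuadratic) (hχ : χ ≠ 1) (T : Finset ℕ) :
    ∃ c > 0, ∀ᶠ N : ℕ in atTop,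
      c * (N : ℝ) ^ 2 / Real.log N ≤ #(coprimePairs ({p | χ p = -1} \ T) N) := by
  obtain ⟨a, ha, hχa⟩ := exists_isUnit_apply_eq_neg_one hquad hχ
  have hsub : {p : ℕ | (p : ZMod q) = a} ⊆ {p | χ p = -1} := fun p hp ↦ (congrArg χ hp).trans hχa
  exact exists_forall_mul_sq_div_log_le_card_coprimePairs
    (exists_forall_natCast_le_sum_primesIn_log_of_diff_subset ha (Set.sdiff_subset_sdiff_left hsub))
    (exists_forall_log_le_recipSum_neg_one_sq hquad hχ T)

theorem exists_isQuadratic_mod_three : ∃ χ : DirichletCharacter ℝ 3,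
    χ.IsQuadratic ∧ χ ≠ 1 ∧ {p : ℕ | χ p = -1} = {p | p % 3 = 2} := by
  refine ⟨(quadraticChar (ZMod 3)).ringHomComp (Int.castRingHom ℝ),
    (quadraticChar_isQuadratic _).comp _, ?_, ?_⟩
  · refine (MulChar.ringHomComp_ne_one_iff (Int.castRingHom ℝ).injective_int).2
      (quadraticChar_ne_one ?_)
    simp [ZMod.ringChar_zmod_n]
  · ext p
    have hvalues : ∀ a : ZMod 3, quadraticChar (ZMod 3) a = -1 ↔ a = 2 := by decide
    have hcast : (p : ZMod 3) = 2 ↔ p % 3 = 2 := (ZMod.natCast_eq_natCast_iff' p 2 3)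
    rw [Set.mem_ofPred_eq, Set.mem_ofPred_eq, ← hcast, ← hvalues, MulChar.ringHomComp_apply,
      eq_intCast]
    norm_cast

end QuadraticNonresidues

section HasseFailures

variable {B : ℝ} {N : ℕ}

/-- The coefficient pairs `(a, b)` of the Hasse failures `a u₁³ + a u₂³ - 2 b u₃³ = b` with
`a, b ≤ B`. -/
def hassePairs (B : ℝ) : Set (ℕ × ℕ) :=
  {ab : ℕ × ℕ | 0 < ab.1 ∧ 0 < ab.2 ∧ (ab.1 : ℝ) ≤ B ∧ (ab.2 : ℝ) ≤ B ∧
    Nat.Coprime ab.1 ab.2 ∧ ab.1 % 18 = 17 ∧ ab.2 % 18 = 11 ∧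
    ∀ p : ℕ, p.Prime → p ∣ ab.1 * ab.2 → p % 3 = 2}

theorem finite_hassePairs (B : ℝ) : (hassePairs B).Finite :=
  ((Set.finite_Iic ⌊B⌋₊).prod (Set.finite_Iic ⌊B⌋₊)).subset fun _ h ↦
    ⟨Nat.le_floor h.2.2.1, Nat.le_floor h.2.2.2.1⟩

/-- The integers `p ≡ 2 (mod 3)` other than `2`, `5` and `11`; only the primes among them matter.
Products of these are prime to `18`, so powers of the primitive roots `5` and `11` move them into
any unit class modulo `18`; `5` and `11` are left out to keep the adjusted pairs coprime. -/
def adjustablePrimes : Set ℕ := {p | p % 3 = 2} \ ({2, 5, 11} : Finset ℕ)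

theorem exists_mul_pow_mod_eighteen_eq {g n r : ℕ} (hg : g = 5 ∨ g = 11) (hn : n.Coprime 18)
    (hr : r.Coprime 18) (hr18 : r < 18) : ∃ j < 6, n * g ^ j % 18 = r := by
  have key : ∀ g ∈ [5, 11], ∀ m < 18, m.Coprime 18 → ∀ r < 18, r.Coprime 18 →
      ∃ j < 6, m * g ^ j % 18 = r := by decide
  obtain ⟨j, hj, h⟩ := key g (by simpa using hg) (n % 18) (Nat.mod_lt n (by norm_num))
    ((Nat.mod_modEq n 18).gcd_eq.trans hn) r hr18 hr
  exact ⟨j, hj, by rw [← h, Nat.mod_mul_mod]⟩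

theorem coprime_of_mem_factoredMonoid {S : Set ℕ} {n p : ℕ} (hn : n ∈ factoredMonoid S)
    (hp : p.Prime) (hpS : p ∉ S) : n.Coprime p :=
  ((hp.coprime_iff_not_dvd).2 fun h ↦ hpS ((mem_factoredMonoid.1 hn).2 p hp h)).symm

theorem exists_mul_pow_mod_eighteen_eq_of_mem {g n r : ℕ} (hg : g = 5 ∨ g = 11)
    (hn : n ∈ factoredMonoid adjustablePrimes) (hr : r.Coprime 18) (hr18 : r < 18) :
    ∃ j < 6, n * g ^ j % 18 = r := by
  have h2 : n.Coprime 2 :=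
    coprime_of_mem_factoredMonoid hn Nat.prime_two (by simp [adjustablePrimes])
  have h3 : n.Coprime 3 :=
    coprime_of_mem_factoredMonoid hn Nat.prime_three (by simp [adjustablePrimes])
  exact exists_mul_pow_mod_eighteen_eq hg (h2.mul_right (h3.pow_right 2)) hr hr18

theorem mul_pow_mem_hassePairs (hN : N ≤ B / 11 ^ 5) {x : ℕ × ℕ}
    (hx : x ∈ coprimePairs adjustablePrimes N) {j k : ℕ} (hj : j < 6) (hk : k < 6)
    (hxj : x.1 * 5 ^ j % 18 = 17) (hxk : x.2 * 11 ^ k % 18 = 11) :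
    (x.1 * 5 ^ j, x.2 * 11 ^ k) ∈ hassePairs B := by
  obtain ⟨⟨h1, h2⟩, hcop⟩ := mem_coprimePairs.1 hx
  obtain ⟨h1N, h1⟩ := mem_factoredUpTo.1 h1
  obtain ⟨h2N, h2⟩ := mem_factoredUpTo.1 h2
  have h5 : Nat.Prime 5 := Nat.prime_five
  have h11 : Nat.Prime 11 := by norm_num
  have hbound {n g i : ℕ} (hn : n ≤ N) (hg : g ≤ 11) (hi : i < 6) :
      ((n * g ^ i : ℕ) : ℝ) ≤ B := by
    have hpow : g ^ i ≤ 11 ^ 5 :=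
      (Nat.pow_le_pow_left hg i).trans (Nat.pow_le_pow_right (by norm_num) (by lia))
    calc ((n * g ^ i : ℕ) : ℝ) ≤ (N * 11 ^ 5 : ℕ) := Nat.cast_le.2 (Nat.mul_le_mul hn hpow)
      _ = N * 11 ^ 5 := by norm_num
      _ ≤ B := (le_div_iff₀ (by positivity)).1 hN
  have hcop' : (x.1 * 5 ^ j).Coprime (x.2 * 11 ^ k) := by
    have h1_11 : x.1.Coprime 11 := coprime_of_mem_factoredMonoid h1 h11 (by simp [adjustablePrimes])
    have h2_5 : x.2.Coprime 5 := coprime_of_mem_factoredMonoid h2 h5 (by simp [adjustablePrimes])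
    have h5_11 : Nat.Coprime 5 11 := by norm_num
    exact (hcop.mul_right (h1_11.pow_right k)).mul_left
      ((h2_5.symm.mul_right (h5_11.pow_right k)).pow_left j)
  have hfactored : x.1 * 5 ^ j * (x.2 * 11 ^ k) ∈ factoredMonoid {p | p % 3 = 2} :=
    have hsub : factoredMonoid adjustablePrimes ≤ factoredMonoid {p | p % 3 = 2} :=
      factoredMonoid_mono Set.sdiff_subset
    have hmem {p : ℕ} (hp : p.Prime) (hp3 : p % 3 = 2) : p ∈ factoredMonoid {p | p % 3 = 2} :=
      mem_factoredMonoid_of_prime hp hp3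
    mul_mem (mul_mem (hsub h1) (pow_mem (hmem h5 rfl) j))
      (mul_mem (hsub h2) (pow_mem (hmem h11 rfl) k))
  obtain ⟨hne, hprimes⟩ := mem_factoredMonoid.1 hfactored
  exact ⟨(left_ne_zero_of_mul hne).pos, (right_ne_zero_of_mul hne).pos,
    hbound h1N (by norm_num) hj, hbound h2N le_rfl hk,
    hcop', hxj, hxk, hprimes⟩

theorem card_coprimePairs_le_ncard_hassePairs_mul (hN : N ≤ B / 11 ^ 5) :
    #(coprimePairs adjustablePrimes N) ≤ (hassePairs B).ncard * 36 := by
  have hfive (n : ℕ) (hn : n ∈ factoredMonoid adjustablePrimes) : ∃ j < 6, n * 5 ^ j % 18 = 17 :=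
    exists_mul_pow_mod_eighteen_eq_of_mem (.inl rfl) hn (by norm_num) (by norm_num)
  have heleven (n : ℕ) (hn : n ∈ factoredMonoid adjustablePrimes) : ∃ k < 6, n * 11 ^ k % 18 = 11 :=
    exists_mul_pow_mod_eighteen_eq_of_mem (.inr rfl) hn (by norm_num) (by norm_num)
  choose! j hj hj17 using hfive
  choose! k hk hk11 using heleven
  let adjust (x : ℕ × ℕ) : (ℕ × ℕ) × (ℕ × ℕ) :=
    ((x.1 * 5 ^ j x.1, x.2 * 11 ^ k x.2), (j x.1, k x.2))
  have hmaps : ∀ x ∈ coprimePairs adjustablePrimes N,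
      adjust x ∈ (finite_hassePairs B).toFinset ×ˢ (range 6 ×ˢ range 6) := by
    intro x hx
    obtain ⟨h1, h2⟩ := (mem_coprimePairs.1 hx).1
    rw [mem_factoredUpTo] at h1 h2
    simp only [adjust, mem_product, Set.Finite.mem_toFinset, mem_range]
    exact ⟨mul_pow_mem_hassePairs hN hx (hj _ h1.2) (hk _ h2.2) (hj17 _ h1.2) (hk11 _ h2.2),
      hj _ h1.2, hk _ h2.2⟩
  have hinj : Function.Injective adjust := by
    rintro ⟨a, b⟩ ⟨a', b'⟩ h
    simp only [adjust, Prod.mk.injEq] at h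
    obtain ⟨⟨ha, hb⟩, hja, hkb⟩ := h
    rw [hja] at ha
    rw [hkb] at hb
    rw [Nat.eq_of_mul_eq_mul_right (by positivity) ha,
      Nat.eq_of_mul_eq_mul_right (by positivity) hb]
  calc #(coprimePairs adjustablePrimes N)
      ≤ #((finite_hassePairs B).toFinset ×ˢ (range 6 ×ˢ range 6)) :=
        card_le_card_of_injOn adjust hmaps hinj.injOn
    _ = (hassePairs B).ncard * 36 := by
        rw [card_product, card_product, card_range,
          Set.ncard_eq_toFinset_card _ (finite_hassePairs B)]

theorem exists_forall_mul_sq_div_log_le_card_coprimePairs_adjustablePrimes :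
    ∃ c > 0, ∀ᶠ N : ℕ in atTop,
      c * (N : ℝ) ^ 2 / Real.log N ≤ #(coprimePairs adjustablePrimes N) := by
  obtain ⟨χ, hquad, hχ, hset⟩ := exists_isQuadratic_mod_three
  rw [adjustablePrimes, ← hset]
  exact exists_forall_mul_sq_div_log_le_card_coprimePairs_neg_one hquad hχ _

theorem eventually_sq_div_log_le_floor_sq_div_log {K : ℝ} (hK : 1 ≤ K) :
    ∀ᶠ B : ℝ in atTop, B ^ 2 / Real.log B ≤
      (2 * K) ^ 2 * ((⌊B / K⌋₊ : ℝ) ^ 2 / Real.log ⌊B / K⌋₊) := by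
  filter_upwards [eventually_ge_atTop (2 * K)] with B hB
  have hBK : 2 ≤ B / K := (le_div_iff₀ (by positivity)).2 hB
  have hfloor_le : (⌊B / K⌋₊ : ℝ) ≤ B := (Nat.floor_le (by positivity)).trans
    (div_le_self (by linarith) hK)
  have hfloor_ge : (2 : ℝ) ≤ ⌊B / K⌋₊ := Nat.ofNat_le_cast.2 (Nat.le_floor (mod_cast hBK))
  have hlog : 0 < Real.log ⌊B / K⌋₊ := Real.log_pos (by linarith)
  have hB_le : B ≤ 2 * K * ⌊B / K⌋₊ := by
    have := (div_lt_iff₀ (by positivity)).1 (Nat.lt_floor_add_one (B / K))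
    nlinarith
  rw [← mul_div_assoc, ← mul_pow]
  gcongr
  linarith

end HasseFailures

/-- The number of pairs `(a,b)` of positive coprime integers at most `B`
with `a ≡ 17 (mod 18)`, `b ≡ 11 (mod 18)` and every prime dividing `ab` congruent to
`2 (mod 3)` is at least `c·B²/log B` for large `B`. -/
theorem stmt_7 :
    ∃ c B₀ : ℝ, 0 < c ∧ 3 ≤ B₀ ∧ ∀ B : ℝ, B₀ ≤ B →
      c * B ^ 2 / Real.log B ≤
        ({ab : ℕ × ℕ | 0 < ab.1 ∧ 0 < ab.2 ∧ (ab.1 : ℝ) ≤ B ∧ (ab.2 : ℝ) ≤ B ∧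
          Nat.Coprime ab.1 ab.2 ∧ ab.1 % 18 = 17 ∧ ab.2 % 18 = 11 ∧
          ∀ p : ℕ, p.Prime → p ∣ ab.1 * ab.2 → p % 3 = 2}.ncard : ℝ) := by
  let K : ℝ := 11 ^ 5
  have hK : 1 ≤ K := one_le_pow₀ (by norm_num)
  have hfloor : Tendsto (fun B : ℝ ↦ ⌊B / K⌋₊) atTop atTop :=
    tendsto_nat_floor_atTop.comp (tendsto_id.atTop_div_const (by positivity))
  obtain ⟨c, hc, hpairs⟩ := exists_forall_mul_sq_div_log_le_card_coprimePairs_adjustablePrimes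
  obtain ⟨B₀, hB₀⟩ := eventually_atTop.1
    ((hfloor.eventually hpairs).and (eventually_sq_div_log_le_floor_sq_div_log hK))
  refine ⟨c / (36 * (2 * K) ^ 2), max 3 B₀, by positivity, le_max_left 3 B₀, fun B hB ↦ ?_⟩
  obtain ⟨hB3, hB⟩ := max_le_iff.1 hB
  obtain ⟨hpairs, hfloor⟩ := hB₀ B hB
  have hcard : (#(coprimePairs adjustablePrimes ⌊B / K⌋₊) : ℝ) ≤ (hassePairs B).ncard * 36 :=
    mod_cast card_coprimePairs_le_ncard_hassePairs_mul (Nat.floor_le (by positivity))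
  calc c / (36 * (2 * K) ^ 2) * B ^ 2 / Real.log B
      = c / (36 * (2 * K) ^ 2) * (B ^ 2 / Real.log B) := mul_div_assoc ..
    _ ≤ c / (36 * (2 * K) ^ 2) *
          ((2 * K) ^ 2 * ((⌊B / K⌋₊ : ℝ) ^ 2 / Real.log ⌊B / K⌋₊)) := by gcongr
    _ = c * (⌊B / K⌋₊ : ℝ) ^ 2 / Real.log ⌊B / K⌋₊ / 36 := by field_simp
    _ ≤ (hassePairs B).ncard := (div_le_iff₀ (by norm_num)).2 (hpairs.trans hcard)
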